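/- Splitting for LBV: for all structures P and Q and every context C{ }, if C(P,Q) is provable in LBV, then there exist structures S₁ and S₂ such that (a) for every structure X there is a derivation in LBV with premise [X,S₁,S₂] and conclusion C{X}, and (b) [P,S₁] and [Q,S₂] are both provable in LBV. -/

import Mathlib

/-!
Up to equivalence, LBV is multiplicative linear logic with mix in which both units are
identified.  The proof goes through a cut-free one-sided sequent calculus `Seq` for that logic.

* `Seq` is complete for LBV without any syntactic cut elimination: multisets of structures form
  a phase space whose pole consists of the `Seq`-derivable sequents, structures are interpreted
  in it by `den`, the equivalence becomes equality and the rules of LBV become inclusions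
  (`den_equiv`, `den_step`), and Okada's lemma `okada` says that every member of `den P`
  is a context in which `P` is derivable.  Hence a proof of `[P,R]` in LBV gives a derivation of
  the sequent `P, R` (`seq_of_proof_par`).
* Splitting at the root, for `[(P,Q),R]`, is an induction on a derivation of `(P,Q), R`: the rule
  that introduces `(P,Q)` splits its context, and the rules below it are replayed in LBV
  (`Seq.split`, `shallow_splitting`).
* For an arbitrary context, `context_reduction` proceeds by induction on the context: par
  moves the side structure next to the context, and copar is resolved by splitting at the root
  followed by a switch.
-/


/-!
The deep-inference system LBV (the `BV`-free core system of the calculus of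
structures of Guglielmi).  Structures are built from the unit `◦`, atoms `a`
and negated atoms `ā` by par `[P,Q]` and copar `(P,Q)`, and are identified
modulo the congruence generated by associativity, commutativity and the
unit laws `[P,◦]=P`, `(P,◦)=P`.  The rules `ai↓`, `s` (and the atomic cut
`ai↑`) apply inside an arbitrary one-hole context and modulo the
equivalence.
-/

namespace LBV

/-- Structures: the unit `◦`, atoms, negated atoms, par `[P,Q]` and
copar `(P,Q)`. -/
inductive St : Type where
  | unit : St
  | pos  : ℕ → St
  | neg  : ℕ → St
  | par  : St → St → St
  | cop  : St → St → St
deriving DecidableEq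

/-- Negation: `¬◦ = ◦`, `¬[P,Q] = (¬P,¬Q)`, `¬(P,Q) = [¬P,¬Q]`, `¬¬P = P`. -/
def St.negS : St → St
  | .unit => .unit
  | .pos a => .neg a
  | .neg a => .pos a
  | .par P Q => .cop P.negS Q.negS
  | .cop P Q => .par P.negS Q.negS

/-- Atoms are the propositional symbols and their negations. -/
def St.isAtom : St → Prop
  | .pos _ => True
  | .neg _ => True
  | _ => False

/-- Syntactic equivalence of structures: the smallest congruence generated
by associativity and commutativity of par and copar and the unit laws
`[P,◦]=P` and `(P,◦)=P`. -/
inductive Equiv : St → St → Prop where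
  | refl (P : St) : Equiv P P
  | symm {P Q : St} : Equiv P Q → Equiv Q P
  | trans {P Q R : St} : Equiv P Q → Equiv Q R → Equiv P R
  | parComm (P Q : St) : Equiv (.par P Q) (.par Q P)
  | copComm (P Q : St) : Equiv (.cop P Q) (.cop Q P)
  | parAssoc (P Q R : St) : Equiv (.par (.par P Q) R) (.par P (.par Q R))
  | copAssoc (P Q R : St) : Equiv (.cop (.cop P Q) R) (.cop P (.cop Q R))
  | parUnit (P : St) : Equiv (.par P .unit) P
  | copUnit (P : St) : Equiv (.cop P .unit) P
  | parCongr {P P' Q Q' : St} :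
      Equiv P P' → Equiv Q Q' → Equiv (.par P Q) (.par P' Q')
  | copCongr {P P' Q Q' : St} :
      Equiv P P' → Equiv Q Q' → Equiv (.cop P Q) (.cop P' Q')

/-- One-hole contexts. -/
inductive Ctx : Type where
  | hole : Ctx
  | parL : Ctx → St → Ctx
  | parR : St → Ctx → Ctx
  | copL : Ctx → St → Ctx
  | copR : St → Ctx → Ctx

/-- Plugging a structure into the hole of a context. -/
def Ctx.fill : Ctx → St → St
  | .hole, P => P
  | .parL C Q, P => .par (C.fill P) Q
  | .parR Q C, P => .par Q (C.fill P)
  | .copL C Q, P => .cop (C.fill P) Q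
  | .copR Q C, P => .cop Q (C.fill P)

/-- Names of the rules: interaction `ai↓`, co-interaction (atomic cut)
`ai↑`, and switch `s`. -/
inductive Rule : Type where
  | aiDown | aiUp | s
deriving DecidableEq

/-- The rules read at the root of a structure (premise on the left,
conclusion on the right). -/
inductive RootStep : Rule → St → St → Prop where
  | aiDown (A : St) (h : A.isAtom) : RootStep .aiDown .unit (.par A A.negS)
  | aiUp (A : St) (h : A.isAtom) : RootStep .aiUp (.cop A A.negS) .unit
  | s (P Q R : St) : RootStep .s (.cop P (.par Q R)) (.par (.cop P Q) R)

/-- One inference step using a rule from the set `Rs`, applied inside an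
arbitrary context and modulo the equivalence. -/
def Step (Rs : Set Rule) (P Q : St) : Prop :=
  ∃ r ∈ Rs, ∃ (C : Ctx) (P' Q' : St),
    RootStep r P' Q' ∧ Equiv P (C.fill P') ∧ Equiv (C.fill Q') Q

/-- Derivations over an arbitrary step relation: a finite sequence of rule
instances from the premise to the conclusion (modulo the equivalence). -/
inductive Deriv (Stp : St → St → Prop) : St → St → Prop where
  | eqv {P Q : St} : Equiv P Q → Deriv Stp P Q
  | step {P Q R : St} : Stp P Q → Deriv Stp Q R → Deriv Stp P R

/-- The rules of the system LBV. -/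
def LBVRules : Set Rule := {.aiDown, .s}

/-- Derivations in LBV. -/
def DerivLBV (P Q : St) : Prop := Deriv (Step LBVRules) P Q

/-- A proof of `Q` in LBV is a derivation from the unit `◦` to `Q`. -/
def ProofLBV (Q : St) : Prop := DerivLBV .unit Q

end LBV

namespace LBV

/-! ### The equivalence and derivations in LBV -/

/-- Equivalence of structures as a setoid. -/
def stSetoid : Setoid St := ⟨Equiv, Equiv.refl, Equiv.symm, Equiv.trans⟩

/-- Structures modulo equivalence; used to decide par-rearrangements by `abel`. -/
def QSt : Type := Quotient stSetoid

/-- The class of a structure. -/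
def cls (P : St) : QSt := Quotient.mk stSetoid P

theorem cls_eq {P Q : St} : cls P = cls Q ↔ Equiv P Q :=
  ⟨fun h => Quotient.exact (s := stSetoid) h, fun h => Quotient.sound (s := stSetoid) h⟩

instance : Add QSt where
  add := Quotient.map₂ (sa := stSetoid) (sb := stSetoid) (sc := stSetoid) St.par
    (fun _ _ h _ _ h' => Equiv.parCongr h h')

instance : Zero QSt where
  zero := cls .unit

/-- The classes of structures form a commutative monoid, with par as addition and `◦` as zero. -/
instance : AddCommMonoid QSt where
  add_assoc := by
    rintro ⟨a⟩ ⟨b⟩ ⟨c⟩; exact cls_eq.2 (Equiv.parAssoc a b c)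
  add_comm := by
    rintro ⟨a⟩ ⟨b⟩; exact cls_eq.2 (Equiv.parComm a b)
  add_zero := by
    rintro ⟨a⟩; exact cls_eq.2 (Equiv.parUnit a)
  zero_add := by
    rintro ⟨a⟩; exact cls_eq.2 ((Equiv.parComm _ a).trans (Equiv.parUnit a))
  nsmul := nsmulRec

theorem cls_par (P Q : St) : cls (.par P Q) = cls P + cls Q := rfl

theorem cls_unit : cls .unit = 0 := rfl

theorem Equiv.fill {P Q : St} (h : Equiv P Q) : ∀ C : Ctx, Equiv (C.fill P) (C.fill Q)
  | .hole => h
  | .parL C _ => .parCongr (h.fill C) (.refl _)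
  | .parR _ C => .parCongr (.refl _) (h.fill C)
  | .copL C _ => .copCongr (h.fill C) (.refl _)
  | .copR _ C => .copCongr (.refl _) (h.fill C)

/-- Composition of contexts. -/
def Ctx.comp : Ctx → Ctx → Ctx
  | .hole, D => D
  | .parL C Q, D => .parL (C.comp D) Q
  | .parR Q C, D => .parR Q (C.comp D)
  | .copL C Q, D => .copL (C.comp D) Q
  | .copR Q C, D => .copR Q (C.comp D)

theorem Ctx.fill_comp (C D : Ctx) (P : St) : (C.comp D).fill P = C.fill (D.fill P) := by
  induction C <;> simp_all [Ctx.comp, Ctx.fill]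

theorem DerivLBV.of_equiv {P Q : St} (h : Equiv P Q) : DerivLBV P Q := Deriv.eqv h

theorem DerivLBV.of_cls {P Q : St} (h : cls P = cls Q) : DerivLBV P Q := .of_equiv (cls_eq.1 h)

theorem DerivLBV.trans {P Q R : St} (h : DerivLBV P Q) (h' : DerivLBV Q R) : DerivLBV P R := by
  unfold DerivLBV at *
  induction h with
  | eqv e =>
    cases h' with
    | eqv e' => exact .eqv (e.trans e')
    | step s d =>
      obtain ⟨r, hr, C, A, B, hs, e1, e2⟩ := s
      exact .step ⟨r, hr, C, A, B, hs, e.trans e1, e2⟩ d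
  | step s _ ih => exact .step s (ih h')

theorem DerivLBV.fill {P Q : St} (h : DerivLBV P Q) (C : Ctx) :
    DerivLBV (C.fill P) (C.fill Q) := by
  unfold DerivLBV at *
  induction h with
  | eqv e => exact .eqv (e.fill C)
  | step s _ ih =>
    obtain ⟨r, hr, D, A, B, hs, e1, e2⟩ := s
    refine .step ⟨r, hr, C.comp D, A, B, hs, ?_, ?_⟩ ih
    · rw [Ctx.fill_comp]; exact e1.fill C
    · rw [Ctx.fill_comp]; exact e2.fill C

theorem DerivLBV.par {P P' Q Q' : St} (h : DerivLBV P P') (h' : DerivLBV Q Q') :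
    DerivLBV (.par P Q) (.par P' Q') :=
  (h.fill (.parL .hole Q)).trans (h'.fill (.parR P' .hole))

theorem DerivLBV.cop {P P' Q Q' : St} (h : DerivLBV P P') (h' : DerivLBV Q Q') :
    DerivLBV (.cop P Q) (.cop P' Q') :=
  (h.fill (.copL .hole Q)).trans (h'.fill (.copR P' .hole))

theorem DerivLBV.switch (P Q R : St) :
    DerivLBV (.cop P (.par Q R)) (.par (.cop P Q) R) :=
  .step ⟨.s, by simp [LBVRules], .hole, _, _, .s P Q R, .refl _, .refl _⟩ (.eqv (.refl _))

theorem ProofLBV.ai (A : St) (h : A.isAtom) : ProofLBV (.par A A.negS) :=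
  .step ⟨.aiDown, by simp [LBVRules], .hole, _, _, .aiDown A h, .refl _, .refl _⟩
    (.eqv (.refl _))

/-- `([A,S],[B,T])` entails `[(A,B),S,T]`: two switches. -/
theorem DerivLBV.switch₂ (A B S T : St) :
    DerivLBV (.cop (.par A S) (.par B T)) (.par (.cop A B) (.par S T)) := by
  refine (DerivLBV.switch (.par A S) B T).trans ?_
  have h : DerivLBV (.cop (.par A S) B) (.par (.cop A B) S) :=
    (DerivLBV.of_equiv (.copComm _ _)).trans ((DerivLBV.switch B A S).trans
      (DerivLBV.par (.of_equiv (.copComm _ _)) (.of_equiv (.refl _))))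
  exact (h.par (.of_equiv (.refl T))).trans (.of_cls (by simp only [cls_par]; abel))

/-- If `[B,T]` is provable, then `[A,S]` entails `[(A,B),S,T]`. -/
theorem DerivLBV.cop_intro {A B S T : St} (h : ProofLBV (.par B T)) :
    DerivLBV (.par A S) (.par (.cop A B) (.par S T)) :=
  (DerivLBV.of_equiv (.symm (.copUnit _))).trans
    ((DerivLBV.cop (.of_equiv (.refl _)) h).trans (.switch₂ A B S T))

theorem ProofLBV.par {P Q : St} (h : ProofLBV P) (h' : ProofLBV Q) : ProofLBV (.par P Q) :=
  DerivLBV.trans (.of_equiv (.symm (.parUnit _))) (DerivLBV.par h h')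

/-! ### The cut-free sequent calculus -/

/-- Cut-free one-sided sequent calculus for multiplicative linear logic with mix and a single
self-dual unit; a sequent is a finite multiset of structures. -/
inductive Seq : Multiset St → Prop where
  | nil : Seq 0
  | ax (a : ℕ) : Seq {.pos a, .neg a}
  | unit {Γ : Multiset St} : Seq Γ → Seq (.unit ::ₘ Γ)
  | par {A B : St} {Γ : Multiset St} : Seq (A ::ₘ B ::ₘ Γ) → Seq (.par A B ::ₘ Γ)
  | cop {A B : St} {Γ Δ : Multiset St} :
      Seq (A ::ₘ Γ) → Seq (B ::ₘ Δ) → Seq (.cop A B ::ₘ (Γ + Δ))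
  | mix {Γ Δ : Multiset St} : Seq Γ → Seq Δ → Seq (Γ + Δ)

/-! ### Phase semantics -/

open scoped Pointwise

/-- The orthogonal of a set of sequents, with the derivable sequents as pole. -/
def orth (F : Set (Multiset St)) : Set (Multiset St) := {Γ | ∀ Δ ∈ F, Seq (Γ + Δ)}

theorem orth_anti {F G : Set (Multiset St)} (h : F ⊆ G) : orth G ⊆ orth F :=
  fun _ hΓ Δ hΔ => hΓ Δ (h hΔ)

theorem subset_orth_orth (F : Set (Multiset St)) : F ⊆ orth (orth F) :=
  fun Γ hΓ Δ hΔ => by rw [add_comm]; exact hΔ Γ hΓ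

theorem orth_orth_orth (F : Set (Multiset St)) : orth (orth (orth F)) = orth F :=
  (orth_anti (subset_orth_orth F)).antisymm (subset_orth_orth _)

theorem mem_orth_add {F G : Set (Multiset St)} {Γ : Multiset St} :
    Γ ∈ orth (F + G) ↔ ∀ f ∈ F, ∀ g ∈ G, Seq (Γ + (f + g)) := by
  constructor
  · intro h f hf g hg
    exact h _ (Set.add_mem_add hf hg)
  · rintro h _ ⟨f, hf, g, hg, rfl⟩
    exact h f hf g hg

theorem orth_add_orth_orth (F G : Set (Multiset St)) :
    orth (F + orth (orth G)) = orth (F + G) := by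
  apply (orth_anti (Set.add_subset_add_left (subset_orth_orth G))).antisymm
  intro Γ hΓ
  rw [mem_orth_add] at hΓ ⊢
  intro f hf g hg
  have := hg (Γ + f) (fun g' hg' => by rw [add_assoc]; exact hΓ f hf g' hg')
  rwa [add_comm, add_assoc] at this

theorem orth_orth_add (F G : Set (Multiset St)) :
    orth (orth (orth F) + G) = orth (F + G) := by
  rw [add_comm, orth_add_orth_orth, add_comm]

/-- Interpretation of a structure as a fact of the phase space. -/
def den : St → Set (Multiset St)
  | .unit => orth {0}
  | .pos a => orth {{.pos a}}
  | .neg a => orth (orth {{.pos a}})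
  | .par P Q => orth (orth (den P) + orth (den Q))
  | .cop P Q => orth (orth (den P + den Q))

theorem mem_orth_zero {Γ : Multiset St} : Γ ∈ orth {0} ↔ Seq Γ := by simp [orth]

/-- The pole is self-dual, by mix and by derivability of the empty sequent. -/
theorem orth_orth_zero : orth (orth {0}) = orth {0} := by
  ext Γ
  rw [mem_orth_zero]
  constructor
  · intro h
    simpa using h 0 (mem_orth_zero.2 .nil)
  · intro h Δ hΔ
    exact h.mix (mem_orth_zero.1 hΔ)

theorem den_closed (P : St) : orth (orth (den P)) = den P := by
  cases P <;> exact orth_orth_orth _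

theorem den_equiv {P Q : St} (h : Equiv P Q) : den P = den Q := by
  induction h with
  | refl => rfl
  | symm _ ih => exact ih.symm
  | trans _ _ ih ih' => exact ih.trans ih'
  | parComm P Q => simp only [den]; rw [add_comm]
  | copComm P Q => simp only [den]; rw [add_comm]
  | parAssoc P Q R => simp only [den]; rw [orth_orth_add, orth_add_orth_orth, add_assoc]
  | copAssoc P Q R => simp only [den]; rw [orth_orth_add, orth_add_orth_orth, add_assoc]
  | parUnit P =>
    simp only [den]
    rw [orth_add_orth_orth, Set.singleton_zero, add_zero, den_closed]
  | copUnit P =>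
    simp only [den]
    rw [← orth_orth_zero, orth_add_orth_orth, Set.singleton_zero, add_zero, den_closed]
  | parCongr _ _ ih ih' => simp only [den, ih, ih']
  | copCongr _ _ ih ih' => simp only [den, ih, ih']

theorem den_fill {P Q : St} (h : den P ⊆ den Q) :
    ∀ C : Ctx, den (C.fill P) ⊆ den (C.fill Q)
  | .hole => h
  | .parL C _ => orth_anti (Set.add_subset_add_right (orth_anti (den_fill h C)))
  | .parR _ C => orth_anti (Set.add_subset_add_left (orth_anti (den_fill h C)))
  | .copL C _ => orth_anti (orth_anti (Set.add_subset_add_right (den_fill h C)))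
  | .copR _ C => orth_anti (orth_anti (Set.add_subset_add_left (den_fill h C)))

theorem den_ai (A : St) (hA : A.isAtom) : den .unit ⊆ den (.par A A.negS) := by
  have key : ∀ F, orth {0} ⊆ orth (orth F + orth (orth F)) := by
    intro F Γ hΓ
    rw [mem_orth_add]
    intro f hf g hg
    rw [add_comm f g]
    exact (mem_orth_zero.1 hΓ).mix (hg f hf)
  cases A with
  | pos a => exact key _
  | neg a =>
    simp only [St.negS, den]
    rw [add_comm]
    exact key _
  | unit => exact hA.elim
  | par _ _ => exact hA.elim
  | cop _ _ => exact hA.elim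

theorem den_switch (P Q R : St) : den (.cop P (.par Q R)) ⊆ den (.par (.cop P Q) R) := by
  simp only [den]
  rw [orth_orth_orth, ← orth_orth_orth (orth (den P + den Q) + orth (den R))]
  apply orth_anti
  apply orth_anti
  rintro _ ⟨f, hf, x, hx, rfl⟩
  rw [mem_orth_add] at hx ⊢
  intro d hd e he
  have hfd : f + d ∈ orth (den Q) := by
    intro g hg
    have := mem_orth_add.1 hd f hf g hg
    rwa [show f + d + g = d + (f + g) by abel]
  have := hx _ hfd e he
  rwa [show f + x + (d + e) = x + (f + d + e) by abel]

theorem den_step {P Q : St} (h : Step LBVRules P Q) : den P ⊆ den Q := by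
  obtain ⟨r, hr, C, P', Q', hs, e, e'⟩ := h
  rw [den_equiv e, ← den_equiv e']
  apply den_fill
  cases hs with
  | aiDown A hA => exact den_ai A hA
  | aiUp A hA => simp [LBVRules] at hr
  | s P Q R => exact den_switch P Q R

theorem den_deriv {P Q : St} (h : DerivLBV P Q) : den P ⊆ den Q := by
  unfold DerivLBV at h
  induction h with
  | eqv e => exact (den_equiv e).subset
  | step s _ ih => exact (den_step s).trans ih

/-- Okada's lemma: `den P` only contains contexts in which `P` is derivable. -/
theorem okada (P : St) : {P} ∈ orth (den P) := by
  induction P with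
  | unit =>
    intro Γ hΓ
    exact (mem_orth_zero.1 hΓ).unit
  | pos a => exact subset_orth_orth _ rfl
  | neg a =>
    simp only [den]
    rw [orth_orth_orth]
    rintro _ rfl
    rw [add_comm]
    exact .ax a
  | par P Q ihP ihQ =>
    intro Γ hΓ
    have := mem_orth_add.1 hΓ _ ihP _ ihQ
    apply Seq.par
    rw [← Multiset.singleton_add, ← Multiset.singleton_add]
    rwa [show {P} + ({Q} + Γ) = Γ + ({P} + {Q}) by abel]
  | cop P Q ihP ihQ =>
    simp only [den]
    rw [orth_orth_orth, mem_orth_add]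
    intro f hf g hg
    exact Seq.cop (ihP f hf) (ihQ g hg)

theorem seq_of_proof_par {P R : St} (h : ProofLBV (.par P R)) : Seq (P ::ₘ {R}) := by
  have h0 : (0 : Multiset St) ∈ den (.par P R) := den_deriv h (mem_orth_zero.2 .nil)
  have := mem_orth_add.1 h0 _ (okada P) _ (okada R)
  rwa [zero_add] at this

/-! ### Splitting at the root -/

/-- The par of all members of a sequent, taken in an arbitrary order. -/
noncomputable def bigPar (Γ : Multiset St) : St := Γ.toList.foldr St.par .unit

theorem cls_bigPar (Γ : Multiset St) : cls (bigPar Γ) = (Γ.map cls).sum := by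
  have h : ∀ l : List St, cls (l.foldr St.par .unit) = (l.map cls).sum := by
    intro l
    induction l with
    | nil => rfl
    | cons a l ih => rw [List.foldr_cons, cls_par, ih, List.map_cons, List.sum_cons]
  rw [bigPar, h, ← Multiset.sum_coe, ← Multiset.map_coe, Multiset.coe_toList]

theorem cls_bigPar_cons (A : St) (Γ : Multiset St) :
    cls (bigPar (A ::ₘ Γ)) = cls A + cls (bigPar Γ) := by
  simp [cls_bigPar]

theorem cls_bigPar_add (Γ Δ : Multiset St) :
    cls (bigPar (Γ + Δ)) = cls (bigPar Γ) + cls (bigPar Δ) := by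
  simp [cls_bigPar]

theorem ProofLBV.of_cls {P Q : St} (h : ProofLBV P) (e : cls P = cls Q) : ProofLBV Q :=
  DerivLBV.trans h (.of_cls e)

/-- Soundness of the sequent calculus with respect to LBV. -/
theorem Seq.sound {Γ : Multiset St} (h : Seq Γ) : ProofLBV (bigPar Γ) := by
  induction h with
  | nil => exact DerivLBV.of_cls (by simp [cls_bigPar, cls_unit])
  | ax a =>
    exact (ProofLBV.ai (.pos a) trivial).of_cls (by simp [cls_bigPar, cls_par, St.negS])
  | unit _ ih => exact ih.of_cls (by simp [cls_bigPar_cons, cls_unit])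
  | par _ ih => exact ih.of_cls (by simp only [cls_bigPar_cons, cls_par]; abel)
  | @cop A B Γ Δ _ _ ih ih' =>
    have h1 : ProofLBV (.par A (bigPar Γ)) := ih.of_cls (by rw [cls_bigPar_cons, cls_par])
    have h2 : ProofLBV (.par B (bigPar Δ)) := ih'.of_cls (by rw [cls_bigPar_cons, cls_par])
    exact ProofLBV.of_cls (DerivLBV.trans h1 (DerivLBV.cop_intro h2))
      (by simp only [cls_bigPar_cons, cls_bigPar_add, cls_par])
  | mix _ _ ih ih' => exact (ih.par ih').of_cls (by rw [cls_par, cls_bigPar_add])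

/-- The context `R` splits into parts that prove `P` and `Q` respectively. -/
def Splits (P Q R : St) : Prop :=
  ∃ S₁ S₂ : St, DerivLBV (.par S₁ S₂) R ∧ ProofLBV (.par P S₁) ∧ ProofLBV (.par Q S₂)

theorem Splits.mono {P Q R R' : St} (h : Splits P Q R) (d : DerivLBV R R') : Splits P Q R' := by
  obtain ⟨S₁, S₂, h0, h1, h2⟩ := h
  exact ⟨S₁, S₂, h0.trans d, h1, h2⟩

/-- The induction behind splitting at the root.  When the last rule is copar or mix and does not
introduce `(P,Q)`, the premise without `(P,Q)` is provable and can be added to the context. -/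
theorem Seq.split {Θ : Multiset St} (h : Seq Θ) :
    ∀ (P Q : St) (Γ : Multiset St), Θ = .cop P Q ::ₘ Γ → Splits P Q (bigPar Γ) := by
  induction h with
  | nil =>
    intro P Q Γ e
    exact (Multiset.cons_ne_zero e.symm).elim
  | ax a =>
    intro P Q Γ e
    have : St.cop P Q ∈ ({.pos a, .neg a} : Multiset St) := by
      rw [e]; exact Multiset.mem_cons_self _ _
    simp at this
  | unit _ ih =>
    intro P Q Γ e
    rcases Multiset.cons_eq_cons.1 e with ⟨h, _⟩ | ⟨_, Γ', e1, rfl⟩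
    · cases h
    · exact (ih P Q Γ' e1).mono (.of_cls (by simp [cls_bigPar_cons, cls_unit]))
  | @par A B _ _ ih =>
    intro P Q Γ e
    rcases Multiset.cons_eq_cons.1 e with ⟨h, _⟩ | ⟨_, Γ', rfl, rfl⟩
    · cases h
    · refine (ih P Q (A ::ₘ B ::ₘ Γ') ?_).mono (.of_cls ?_)
      · rw [Multiset.cons_swap B, Multiset.cons_swap A]
      · simp only [cls_bigPar_cons, cls_par]; abel
  | @cop A B Δ₁ Δ₂ d₁ d₂ ih₁ ih₂ =>
    intro P Q Γ e
    have h₁ : ProofLBV (.par A (bigPar Δ₁)) := d₁.sound.of_cls (by rw [cls_bigPar_cons, cls_par])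
    have h₂ : ProofLBV (.par B (bigPar Δ₂)) := d₂.sound.of_cls (by rw [cls_bigPar_cons, cls_par])
    rcases Multiset.cons_eq_cons.1 e with ⟨h, rfl⟩ | ⟨_, Γ', e1, rfl⟩
    · cases h
      exact ⟨_, _, .of_cls (by rw [cls_par, cls_bigPar_add]), h₁, h₂⟩
    · have hm : St.cop P Q ∈ Δ₁ + Δ₂ := by rw [e1]; exact Multiset.mem_cons_self _ _
      rcases Multiset.mem_add.1 hm with hm | hm
      · obtain ⟨Δ, rfl⟩ := Multiset.exists_cons_of_mem hm
        rw [Multiset.cons_add, Multiset.cons_inj_right] at e1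
        subst e1
        refine (ih₁ P Q (A ::ₘ Δ) (Multiset.cons_swap _ _ _)).mono ?_
        refine (DerivLBV.of_cls (Q := .par A (bigPar Δ)) ?_).trans
          ((DerivLBV.cop_intro h₂).trans (.of_cls ?_))
        · rw [cls_bigPar_cons, cls_par]
        · simp only [cls_bigPar_cons, cls_bigPar_add, cls_par]
      · obtain ⟨Δ, rfl⟩ := Multiset.exists_cons_of_mem hm
        rw [Multiset.add_cons, Multiset.cons_inj_right] at e1
        subst e1
        refine (ih₂ P Q (B ::ₘ Δ) (Multiset.cons_swap _ _ _)).mono ?_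
        refine (DerivLBV.of_cls (Q := .par B (bigPar Δ)) ?_).trans
          ((DerivLBV.cop_intro h₁).trans (.of_cls ?_))
        · rw [cls_bigPar_cons, cls_par]
        · have hc : cls (.cop B A) = cls (.cop A B) := cls_eq.2 (.copComm _ _)
          simp only [cls_bigPar_cons, cls_bigPar_add, cls_par, hc]; abel
  | @mix Δ₁ Δ₂ d₁ d₂ ih₁ ih₂ =>
    intro P Q Γ e
    have key : ∀ S T : St, ProofLBV T → DerivLBV S (.par S T) := fun S T hT =>
      (DerivLBV.of_equiv (.symm (.parUnit S))).trans (DerivLBV.par (.of_equiv (.refl S)) hT)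
    have hm : St.cop P Q ∈ Δ₁ + Δ₂ := by rw [e]; exact Multiset.mem_cons_self _ _
    rcases Multiset.mem_add.1 hm with hm | hm
    · obtain ⟨Δ, rfl⟩ := Multiset.exists_cons_of_mem hm
      rw [Multiset.cons_add, Multiset.cons_inj_right] at e
      subst e
      exact (ih₁ P Q Δ rfl).mono ((key _ _ d₂.sound).trans
        (.of_cls (by rw [cls_par, cls_bigPar_add])))
    · obtain ⟨Δ, rfl⟩ := Multiset.exists_cons_of_mem hm
      rw [Multiset.add_cons, Multiset.cons_inj_right] at e
      subst e
      exact (ih₂ P Q Δ rfl).mono ((key _ _ d₁.sound).trans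
        (.of_cls (by rw [cls_par, cls_bigPar_add, add_comm])))

theorem shallow_splitting {P Q R : St} (h : ProofLBV (.par (.cop P Q) R)) : Splits P Q R :=
  ((seq_of_proof_par h).split P Q {R} rfl).mono (.of_cls (by simp [cls_bigPar]))

/-! ### Splitting in an arbitrary context -/

theorem context_reduction (P Q : St) (C : Ctx) :
    ∀ R : St, ProofLBV (.par (C.fill (.cop P Q)) R) →
      ∃ S₁ S₂ : St,
        (∀ X : St, DerivLBV (.par X (.par S₁ S₂)) (.par (C.fill X) R)) ∧
        ProofLBV (.par P S₁) ∧ ProofLBV (.par Q S₂) := by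
  -- The two copar cases differ only by commutativity.
  have cop_case : ∀ (C : Ctx) (T R : St),
      (∀ R : St, ProofLBV (.par (C.fill (.cop P Q)) R) →
        ∃ S₁ S₂ : St,
          (∀ X : St, DerivLBV (.par X (.par S₁ S₂)) (.par (C.fill X) R)) ∧
          ProofLBV (.par P S₁) ∧ ProofLBV (.par Q S₂)) →
      ProofLBV (.par (.cop (C.fill (.cop P Q)) T) R) →
      ∃ S₁ S₂ : St,
        (∀ X : St, DerivLBV (.par X (.par S₁ S₂)) (.par (.cop (C.fill X) T) R)) ∧
        ProofLBV (.par P S₁) ∧ ProofLBV (.par Q S₂) := by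
    intro C T R ih h
    obtain ⟨R₁, R₂, hR, h₁, h₂⟩ := shallow_splitting h
    obtain ⟨S₁, S₂, hS, hP, hQ⟩ := ih R₁ h₁
    exact ⟨S₁, S₂, fun X => (hS X).trans ((DerivLBV.cop_intro h₂).trans
      (DerivLBV.par (.of_equiv (.refl _)) hR)), hP, hQ⟩
  induction C with
  | hole =>
    intro R h
    obtain ⟨S₁, S₂, hR, hP, hQ⟩ := shallow_splitting h
    exact ⟨S₁, S₂, fun X => DerivLBV.par (.of_equiv (.refl X)) hR, hP, hQ⟩
  | parL C T ih =>
    intro R h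
    obtain ⟨S₁, S₂, hS, hP, hQ⟩ := ih (.par T R)
      (h.of_cls (by simp only [Ctx.fill, cls_par]; abel))
    exact ⟨S₁, S₂, fun X => (hS X).trans (.of_cls (by simp only [Ctx.fill, cls_par]; abel)),
      hP, hQ⟩
  | parR T C ih =>
    intro R h
    obtain ⟨S₁, S₂, hS, hP, hQ⟩ := ih (.par T R)
      (h.of_cls (by simp only [Ctx.fill, cls_par]; abel))
    exact ⟨S₁, S₂, fun X => (hS X).trans (.of_cls (by simp only [Ctx.fill, cls_par]; abel)),
      hP, hQ⟩
  | copL C T ih => exact fun R h => cop_case C T R ih h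
  | copR T C ih =>
    intro R h
    obtain ⟨S₁, S₂, hS, hP, hQ⟩ := cop_case C T R ih
      (DerivLBV.trans h (.of_equiv (.parCongr (.copComm _ _) (.refl _))))
    exact ⟨S₁, S₂, fun X => (hS X).trans (.of_equiv (.parCongr (.copComm _ _) (.refl _))),
      hP, hQ⟩

/-- Splitting for LBV.
For all structures `P`, `Q` and every context `C{ }`, if `C(P,Q)` is
provable in LBV, then there exist structures `S₁`, `S₂` such that (a) for
every structure `X` there is a derivation in LBV from `[X,S₁,S₂]` to `C{X}`,
and (b) `[P,S₁]` and `[Q,S₂]` are both provable in LBV. -/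
theorem splitting (P Q : St) (C : Ctx)
    (h : ProofLBV (C.fill (.cop P Q))) :
    ∃ S₁ S₂ : St,
      (∀ X : St, DerivLBV (.par X (.par S₁ S₂)) (C.fill X)) ∧
      ProofLBV (.par P S₁) ∧ ProofLBV (.par Q S₂) := by
  obtain ⟨S₁, S₂, hS, hP, hQ⟩ := context_reduction P Q C .unit
    (DerivLBV.trans h (.of_equiv (.symm (.parUnit _))))
  exact ⟨S₁, S₂, fun X => (hS X).trans (.of_equiv (.parUnit _)), hP, hQ⟩

end LBV
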